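/- There exists a constant C ≥ 1, depending only on n, d, and C₀, such that for every x ∈ ℝⁿ and r > 0: (i) if δ(x) ≥ 2r, then C⁻¹ rⁿ w(x) ≤ m(B(x,r)) ≤ C rⁿ w(x); (ii) if δ(x) ≤ 2r, then C⁻¹ r^{d+1} ≤ m(B(x,r)) ≤ C r^{d+1}. -/

import Mathlib

open MeasureTheory Metric Set Filter
open scoped ENNReal NNReal Topology

noncomputable section

/-- Euclidean space `ℝⁿ`. -/
abbrev Euc (n : ℕ) := EuclideanSpace ℝ (Fin n)

/-- `Γ ⊆ ℝⁿ` is `d`-Ahlfors regular with constant `C₀`. -/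
def AhlforsRegular (n : ℕ) (d C₀ : ℝ) (Γ : Set (Euc n)) : Prop :=
  ∀ x ∈ Γ, ∀ r : ℝ, 0 < r →
    ENNReal.ofReal (C₀⁻¹ * r ^ d) ≤ μH[d] (Γ ∩ ball x r) ∧
      μH[d] (Γ ∩ ball x r) ≤ ENNReal.ofReal (C₀ * r ^ d)

/-- The weight `w(x) = dist(x, Γ) ^ (d + 1 - n)`. -/
def weightW (n : ℕ) (d : ℝ) (Γ : Set (Euc n)) (x : Euc n) : ℝ :=
  infDist x Γ ^ (d + 1 - (n : ℝ))

/-- The measure `m` with density `w` with respect to Lebesgue measure. -/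
def measW (n : ℕ) (d : ℝ) (Γ : Set (Euc n)) : Measure (Euc n) :=
  volume.withDensity fun x => ENNReal.ofReal (weightW n d Γ x)

/-- `v` is a distributional gradient of `u` on the open set `E`: for every smooth
compactly supported test function `φ` with support in `E`, `∫_E u ∇φ = -∫_E φ v`. -/
def IsDistribGradOn {n : ℕ} (u : Euc n → ℝ) (v : Euc n → Euc n) (E : Set (Euc n)) : Prop :=
  ∀ φ : Euc n → ℝ, ContDiff ℝ (⊤ : ℕ∞) φ → HasCompactSupport φ → tsupport φ ⊆ E →
    ∫ x in E, u x • gradient φ x = -∫ x in E, φ x • v x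

/-- The averages of `u` over small balls centered at `x` converge to `t`. -/
def HasTraceAt {n : ℕ} (u : Euc n → ℝ) (x : Euc n) (t : ℝ) : Prop :=
  Tendsto (fun ρ : ℝ => ⨍ y in ball x ρ, u y) (𝓝[>] (0 : ℝ)) (𝓝 t)

/-- `u` belongs to the weighted Sobolev space `W = Ẇ^{1,2}_w(Ω)`, `Ω = Γᶜ`, with
distributional gradient `v` on `Ω` lying in `L²(Ω, m)`. -/
structure MemW (n : ℕ) (d : ℝ) (Γ : Set (Euc n)) (u : Euc n → ℝ) (v : Euc n → Euc n) :
    Prop where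
  locInt : LocallyIntegrableOn u Γᶜ volume
  gradLocInt : LocallyIntegrableOn v Γᶜ volume
  isGrad : IsDistribGradOn u v Γᶜ
  l2 : ∫⁻ x in Γᶜ, ENNReal.ofReal (‖v x‖ ^ 2) ∂(measW n d Γ) < ⊤

/-- `u` belongs to the local space `W_r(E)`: `u ∈ L¹_loc(E)` and `φ u` (extended by `0`)
belongs to `W` for every smooth compactly supported `φ` with support in `E`. -/
def MemWrOn (n : ℕ) (d : ℝ) (Γ : Set (Euc n)) (E : Set (Euc n)) (u : Euc n → ℝ) : Prop :=
  LocallyIntegrableOn u E volume ∧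
    ∀ φ : Euc n → ℝ, ContDiff ℝ (⊤ : ℕ∞) φ → HasCompactSupport φ → tsupport φ ⊆ E →
      ∃ vφ : Euc n → Euc n, MemW n d Γ (fun x => φ x * u x) vφ

/-- Degenerate ellipticity and boundedness conditions for the matrix `A`. -/
def EllipticOn (n : ℕ) (d : ℝ) (Γ : Set (Euc n)) (A : Euc n → Euc n →L[ℝ] Euc n)
    (C₁ : ℝ) : Prop :=
  ∀ x, x ∉ Γ →
    (∀ ξ ζ : Euc n, |∑ i, A x ξ i * ζ i| ≤ C₁ * weightW n d Γ x * ‖ξ‖ * ‖ζ‖) ∧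
      ∀ ξ : Euc n, C₁⁻¹ * weightW n d Γ x * ‖ξ‖ ^ 2 ≤ ∑ i, A x ξ i * ξ i

/-- `u`, with gradient `v`, is a weak subsolution of `- div A ∇u = 0` on `U ⊆ Ω = Γᶜ`. -/
def SubsolOn {n : ℕ} (Γ : Set (Euc n)) (A : Euc n → Euc n →L[ℝ] Euc n)
    (v : Euc n → Euc n) (U : Set (Euc n)) : Prop :=
  ∀ φ : Euc n → ℝ, ContDiff ℝ (⊤ : ℕ∞) φ → HasCompactSupport φ → tsupport φ ⊆ U →
    (∀ x, 0 ≤ φ x) → ∫ x in Γᶜ, ∑ i, A x (v x) i * gradient φ x i ≤ 0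

/-- `u`, with gradient `v`, is a weak supersolution of `- div A ∇u = 0` on `U ⊆ Ω = Γᶜ`. -/
def SupersolOn {n : ℕ} (Γ : Set (Euc n)) (A : Euc n → Euc n →L[ℝ] Euc n)
    (v : Euc n → Euc n) (U : Set (Euc n)) : Prop :=
  ∀ φ : Euc n → ℝ, ContDiff ℝ (⊤ : ℕ∞) φ → HasCompactSupport φ → tsupport φ ⊆ U →
    (∀ x, 0 ≤ φ x) → 0 ≤ ∫ x in Γᶜ, ∑ i, A x (v x) i * gradient φ x i

/-- `u`, with gradient `v`, is a weak solution of `- div A ∇u = 0` on `U ⊆ Ω = Γᶜ`. -/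
def SolOn {n : ℕ} (Γ : Set (Euc n)) (A : Euc n → Euc n →L[ℝ] Euc n)
    (v : Euc n → Euc n) (U : Set (Euc n)) : Prop :=
  ∀ φ : Euc n → ℝ, ContDiff ℝ (⊤ : ℕ∞) φ → HasCompactSupport φ → tsupport φ ⊆ U →
    ∫ x in Γᶜ, ∑ i, A x (v x) i * gradient φ x i = 0

/-!
Write `δ` for the distance to `Γ` and let `σ` be an Ahlfors regular measure on `Γ`. On a ball
`B(x, r)` with `δ(x) ≥ 2 r` the weight is comparable to its value at `x`.

If `δ(x) ≤ 2 r`, then `δ ≤ 3 r` on the ball, which bounds the weight from below wherever `δ > 0`.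
For the upper bound, `σ` has mass about `δ(y) ^ d` at distance about `δ(y)` from `y`, so the weight
`δ(y) ^ (d + 1 - n)` is at most a constant times the Riesz potential `∫ |y - z| ^ (1 - n) dσ(z)`
over a larger ball `B(x, 10 r)`. By Tonelli and the scaling of the kernel, the integral of this
potential over `B(x, r)` is at most a constant times `r · σ(B(x, 10 r))`, hence times `r ^ (d + 1)`.

Finally `δ > 0` almost everywhere: with any exponent `a < n - d` in place of `1`, the potential is
still locally integrable, but it is infinite on the closure of `Γ`.
-/

lemma exists_one_le_inv_le_le_le {c : ℝ} (hc : 0 < c) (b b' : ℝ) :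
    ∃ C : ℝ, 1 ≤ C ∧ C⁻¹ ≤ c ∧ b ≤ C ∧ b' ≤ C :=
  ⟨max 1 (max c⁻¹ (max b b')), by simp, inv_le_of_inv_le₀ hc (by simp), by simp, by simp⟩

section InfDistWeight

variable {X : Type*} [PseudoMetricSpace X]

lemma infDist_pos_of_mem_ball {Γ : Set X} {x y : X} {r : ℝ} (hx : r ≤ infDist x Γ)
    (hy : y ∈ ball x r) : 0 < infDist y Γ := by
  linarith [infDist_le_infDist_add_dist (s := Γ) (x := x) (y := y), mem_ball'.1 hy]

variable [MeasurableSpace X]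

/-- The measure with density `dist(·, Γ) ^ p` with respect to `μ`, the common generalization of
the measures `measW`. For `p < 0` the density is `0` on the closure of `Γ`, since `0 ^ p = 0`. -/
def infDistWeightedMeasure (μ : Measure X) (p : ℝ) (Γ : Set X) : Measure X :=
  μ.withDensity fun x => ENNReal.ofReal (infDist x Γ ^ p)

variable [OpensMeasurableSpace X] {μ : Measure X} {p : ℝ} {Γ : Set X} {x : X} {r D : ℝ}

lemma infDistWeightedMeasure_ball :
    infDistWeightedMeasure μ p Γ (ball x r) =
      ∫⁻ y in ball x r, ENNReal.ofReal (infDist y Γ ^ p) ∂μ :=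
  withDensity_apply _ measurableSet_ball

lemma ofReal_rpow_mul_measure_ball_le_infDistWeightedMeasure (hp : p ≤ 0)
    (hpos : ∀ᵐ y ∂μ.restrict (ball x r), 0 < infDist y Γ) (hD : infDist x Γ + r ≤ D) :
    ENNReal.ofReal (D ^ p) * μ (ball x r) ≤ infDistWeightedMeasure μ p Γ (ball x r) := by
  rw [infDistWeightedMeasure_ball, ← setLIntegral_const]
  refine lintegral_mono_ae ?_
  filter_upwards [hpos, ae_restrict_mem measurableSet_ball] with y hy hyx
  have hyD : infDist y Γ ≤ D := by
    linarith [infDist_le_infDist_add_dist (s := Γ) (x := y) (y := x), mem_ball.1 hyx]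
  exact ENNReal.ofReal_le_ofReal (Real.rpow_le_rpow_of_nonpos hy hyD hp)

lemma infDistWeightedMeasure_ball_le_ofReal_rpow_mul (hp : p ≤ 0) (hD₀ : 0 < D)
    (hD : D + r ≤ infDist x Γ) :
    infDistWeightedMeasure μ p Γ (ball x r) ≤ ENNReal.ofReal (D ^ p) * μ (ball x r) := by
  rw [infDistWeightedMeasure_ball, ← setLIntegral_const]
  refine setLIntegral_mono measurable_const fun y hyx => ?_
  have hDy : D ≤ infDist y Γ := by
    linarith [infDist_le_infDist_add_dist (s := Γ) (x := x) (y := y), mem_ball'.1 hyx]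
  exact ENNReal.ofReal_le_ofReal (Real.rpow_le_rpow_of_nonpos hD₀ hDy hp)

end InfDistWeight

section RieszPotential

variable {X : Type*} [PseudoMetricSpace X] [MeasurableSpace X]

/-- The Riesz potential `∫ dist(y, z) ^ q dσ(z)` of `σ` at `y`. It is written with the extended
distance so that, for `q < 0`, the kernel is `∞` rather than `0` on the diagonal. -/
def rieszPotential (σ : Measure X) (q : ℝ) (y : X) : ℝ≥0∞ :=
  ∫⁻ z, edist y z ^ q ∂σ

variable [OpensMeasurableSpace X]

lemma ofReal_rpow_mul_measure_ball_le_rieszPotential (σ : Measure X) {q R : ℝ} (hq : q ≤ 0)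
    (hR : 0 < R) (y : X) :
    ENNReal.ofReal (R ^ q) * σ (ball y R) ≤ rieszPotential (σ.restrict (ball y R)) q y := by
  rw [rieszPotential, ← setLIntegral_const, ← ENNReal.ofReal_rpow_of_pos hR]
  refine setLIntegral_mono' measurableSet_ball fun z hz => ?_
  have hyz : edist y z ≤ ENNReal.ofReal R := by
    rw [edist_dist]
    exact ENNReal.ofReal_le_ofReal (mem_ball'.1 hz).le
  rw [← ENNReal.inv_le_inv, ← ENNReal.rpow_neg, ← ENNReal.rpow_neg]
  exact ENNReal.rpow_le_rpow hyz (neg_nonneg.2 hq)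

variable [SecondCountableTopology X]

lemma measurable_edist_rpow (q : ℝ) : Measurable fun yz : X × X => edist yz.1 yz.2 ^ q :=
  measurable_edist.pow_const q

lemma measurable_rieszPotential (σ : Measure X) [SFinite σ] (q : ℝ) :
    Measurable (rieszPotential σ q) :=
  (measurable_edist_rpow q).lintegral_prod_right'

lemma setLIntegral_rieszPotential_le (μ σ : Measure X) [SFinite μ] {q : ℝ} {A S : Set X}
    [SFinite (σ.restrict S)] {K : ℝ≥0∞} (hK : ∀ z ∈ S, ∫⁻ y in A, edist y z ^ q ∂μ ≤ K) :
    ∫⁻ y in A, rieszPotential (σ.restrict S) q y ∂μ ≤ K * σ S :=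
  calc ∫⁻ y in A, rieszPotential (σ.restrict S) q y ∂μ
      = ∫⁻ z in S, (∫⁻ y in A, edist y z ^ q ∂μ) ∂σ :=
        lintegral_lintegral_swap (measurable_edist_rpow q).aemeasurable
    _ ≤ ∫⁻ _ in S, K ∂σ := setLIntegral_mono measurable_const hK
    _ = K * σ S := setLIntegral_const S K

end RieszPotential

section AhlforsRegular

variable {X : Type*} [PseudoMetricSpace X] [MeasurableSpace X]

/-- The measure `σ` is `d`-Ahlfors regular on `Γ` with constant `C`: balls centered on `Γ` have
measure comparable to the `d`-th power of their radius. A set `Γ` is `d`-Ahlfors regular when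
the restriction to `Γ` of the `d`-dimensional Hausdorff measure is so on `Γ`. -/
def IsAhlforsRegularOn (σ : Measure X) (d C : ℝ) (Γ : Set X) : Prop :=
  ∀ x ∈ Γ, ∀ r : ℝ, 0 < r →
    ENNReal.ofReal (C⁻¹ * r ^ d) ≤ σ (ball x r) ∧ σ (ball x r) ≤ ENNReal.ofReal (C * r ^ d)

namespace IsAhlforsRegularOn

variable {σ : Measure X} {d C : ℝ} {Γ : Set X} {x : X} {r R : ℝ}

lemma ofReal_le_measure_ball (h : IsAhlforsRegularOn σ d C Γ) (hΓ : Γ.Nonempty) (hr : 0 < r)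
    (hR : infDist x Γ + r < R) : ENNReal.ofReal (C⁻¹ * r ^ d) ≤ σ (ball x R) := by
  obtain ⟨z, hz, hxz⟩ := (infDist_lt_iff hΓ).1 (lt_sub_iff_add_lt.2 hR)
  refine (h z hz r hr).1.trans (measure_mono (ball_subset_ball' ?_))
  rw [dist_comm]
  linarith

lemma measure_ball_le_ofReal (h : IsAhlforsRegularOn σ d C Γ) (hΓ : Γ.Nonempty) (hr : 0 < r)
    (hR : infDist x Γ + r < R) : σ (ball x r) ≤ ENNReal.ofReal (C * R ^ d) := by
  obtain ⟨z, hz, hxz⟩ := (infDist_lt_iff hΓ).1 (lt_sub_iff_add_lt.2 hR)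
  have hR₀ : 0 < R := (add_pos_of_nonneg_of_pos infDist_nonneg hr).trans hR
  refine (measure_mono (ball_subset_ball' ?_)).trans (h z hz R hR₀).2
  linarith

variable [OpensMeasurableSpace X] {q t : ℝ} {y : X}

lemma ofReal_rpow_le_mul_rieszPotential (h : IsAhlforsRegularOn σ d C Γ) (hΓ : Γ.Nonempty)
    (hC : 0 < C) (hq : q ≤ 0) {S : Set X} (ht : 0 < t) (hy : infDist y Γ ≤ t)
    (hS : ball y (3 * t) ⊆ S) :
    ENNReal.ofReal (t ^ (d + q)) ≤
      ENNReal.ofReal (C * 3 ^ (-q)) * rieszPotential (σ.restrict S) q y := by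
  have split_const : t ^ (d + q) = C * 3 ^ (-q) * ((3 * t) ^ q * (C⁻¹ * t ^ d)) := by
    rw [Real.rpow_add ht, Real.rpow_neg (by norm_num), Real.mul_rpow (by norm_num) ht.le]
    field_simp
  rw [split_const, ENNReal.ofReal_mul (by positivity)]
  gcongr
  calc ENNReal.ofReal ((3 * t) ^ q * (C⁻¹ * t ^ d))
      = ENNReal.ofReal ((3 * t) ^ q) * ENNReal.ofReal (C⁻¹ * t ^ d) :=
        ENNReal.ofReal_mul (by positivity)
    _ ≤ ENNReal.ofReal ((3 * t) ^ q) * σ (ball y (3 * t)) := by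
        gcongr
        exact h.ofReal_le_measure_ball hΓ ht (by linarith)
    _ ≤ rieszPotential (σ.restrict (ball y (3 * t))) q y :=
        ofReal_rpow_mul_measure_ball_le_rieszPotential σ hq (by positivity) y
    _ ≤ rieszPotential (σ.restrict S) q y := lintegral_mono_set hS

lemma rieszPotential_eq_top (h : IsAhlforsRegularOn σ d C Γ) (hC : 0 < C) (hq : q ≤ 0)
    (hdq : d + q < 0) (hy : y ∈ closure Γ) {S : Set X} (hS : S ∈ 𝓝 y) :
    rieszPotential (σ.restrict S) q y = ⊤ := by
  have hΓ : Γ.Nonempty := closure_nonempty_iff.1 ⟨y, hy⟩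
  obtain ⟨ε, hε, hεS⟩ := Metric.mem_nhds_iff.1 hS
  have lower_bound : ∀ᶠ t : ℝ in 𝓝[>] 0, ENNReal.ofReal (t ^ (d + q)) ≤
      ENNReal.ofReal (C * 3 ^ (-q)) * rieszPotential (σ.restrict S) q y := by
    filter_upwards [Ioo_mem_nhdsGT (show (0 : ℝ) < ε / 3 by positivity)] with t ⟨ht, htε⟩
    refine h.ofReal_rpow_le_mul_rieszPotential hΓ hC hq ht ?_
      ((ball_subset_ball (by linarith)).trans hεS)
    exact (infDist_zero_of_mem_closure hy).trans_le ht.le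
  have blowup : Tendsto (fun t : ℝ => ENNReal.ofReal (t ^ (d + q))) (𝓝[>] 0) (𝓝 ⊤) :=
    ENNReal.tendsto_ofReal_nhds_top.2 (tendsto_rpow_neg_nhdsGT_zero hdq)
  have mul_eq_top := top_le_iff.1 (le_of_tendsto blowup lower_bound)
  exact (ENNReal.mul_eq_top.1 mul_eq_top).elim And.right fun h => absurd h.1 ENNReal.ofReal_ne_top

end IsAhlforsRegularOn

end AhlforsRegular

section Haar

variable {E : Type*} [NormedAddCommGroup E] [NormedSpace ℝ E] [FiniteDimensional ℝ E]
  [MeasurableSpace E] [BorelSpace E] {μ : Measure E} [μ.IsAddHaarMeasure]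

local notation "dim" => Module.finrank ℝ

lemma addHaar_ball_eq_ofReal (x : E) {r : ℝ} (hr : 0 < r) :
    μ (ball x r) = ENNReal.ofReal (μ.real (ball (0 : E) 1) * r ^ (dim E : ℝ)) := by
  rw [Measure.addHaar_ball_of_pos μ x hr, Real.rpow_natCast, mul_comm,
    ENNReal.ofReal_mul measureReal_nonneg, ofReal_measureReal measure_ball_lt_top.ne]

lemma setIntegral_ball_norm_rpow (a : ℝ) {R : ℝ} (hR : 0 < R) :
    ∫ y in ball (0 : E) R, ‖y‖ ^ (a - dim E) ∂μ =
      R ^ a * ∫ y in ball (0 : E) 1, ‖y‖ ^ (a - dim E) ∂μ := by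
  have scaling := Measure.setIntegral_comp_smul_of_pos μ
    (fun y : E => ‖y‖ ^ (a - dim E)) (ball 0 1) hR
  rw [smul_unitBall_of_pos hR] at scaling
  simp only [norm_smul, Real.norm_of_nonneg hR.le, Real.mul_rpow hR.le (norm_nonneg _),
    integral_const_mul, smul_eq_mul, Real.rpow_sub hR, Real.rpow_natCast] at scaling
  field_simp at scaling
  exact scaling.symm

lemma setLIntegral_ball_edist_rpow [Nontrivial E] {a : ℝ} (ha : 0 < a) (z : E) {R : ℝ}
    (hR : 0 < R) :
    ∫⁻ y in ball z R, edist y z ^ (a - dim E) ∂μ =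
      ENNReal.ofReal (R ^ a * ∫ y in ball (0 : E) 1, ‖y‖ ^ (a - dim E) ∂μ) := by
  have integrable : IntegrableOn (fun y : E => ‖y‖ ^ (a - dim E)) (ball 0 R) μ := by
    refine integrableOn_ball_of_norm_le_rpow (C := 1) (α := dim E - a) Module.finrank_pos
      (by linarith) (ae_of_all _ fun y => ?_) (measurable_norm.pow_const _).aestronglyMeasurable
    rw [one_mul, neg_sub, Real.norm_of_nonneg (by positivity)]
  have preimage_ball : (· - z) ⁻¹' ball 0 R = ball z R := by
    ext y
    simp [dist_eq_norm]
  have translate : ∫⁻ y in ball z R, edist y z ^ (a - dim E) ∂μ =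
      ∫⁻ y in ball (0 : E) R, ‖y‖ₑ ^ (a - dim E) ∂μ := by
    simp_rw [← (measurePreserving_sub_right μ z).setLIntegral_comp_preimage_emb
      (MeasurableEquiv.subRight z).measurableEmbedding _ (ball 0 R), preimage_ball,
      edist_eq_enorm_sub]
  rw [translate, ← setIntegral_ball_norm_rpow a hR,
    ofReal_integral_eq_lintegral_ofReal integrable (ae_of_all _ fun y => by positivity)]
  refine lintegral_congr_ae (ae_restrict_of_ae ?_)
  filter_upwards [Measure.ae_ne μ (0 : E)] with y hy
  rw [← ofReal_norm, ENNReal.ofReal_rpow_of_pos (norm_pos_iff.2 hy)]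

lemma setLIntegral_ball_rieszPotential_le [Nontrivial E] {σ : Measure E} {a : ℝ} (ha : 0 < a)
    {x : E} {r ρ : ℝ} (hr : 0 < r) (hρ : 0 < ρ) (hσ : σ (ball x ρ) ≠ ⊤) :
    ∫⁻ y in ball x r, rieszPotential (σ.restrict (ball x ρ)) (a - dim E) y ∂μ ≤
      ENNReal.ofReal ((r + ρ) ^ a * ∫ y in ball (0 : E) 1, ‖y‖ ^ (a - dim E) ∂μ) *
        σ (ball x ρ) := by
  have : IsFiniteMeasure (σ.restrict (ball x ρ)) := isFiniteMeasure_restrict.2 hσ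
  refine setLIntegral_rieszPotential_le μ σ fun z hz => ?_
  rw [← setLIntegral_ball_edist_rpow ha z (by positivity)]
  refine lintegral_mono_set (ball_subset_ball' ?_)
  linarith [mem_ball'.1 hz]

section FarFromSet

variable {p r : ℝ} {Γ : Set E} {x : E}

lemma ofReal_le_infDistWeightedMeasure_ball_of_two_mul_le (hp : p ≤ 0) (hr : 0 < r)
    (hx : 2 * r ≤ infDist x Γ) :
    ENNReal.ofReal (3 ^ p * μ.real (ball (0 : E) 1) * r ^ (dim E : ℝ) * infDist x Γ ^ p) ≤
      infDistWeightedMeasure μ p Γ (ball x r) := by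
  have hpos : ∀ᵐ y ∂μ.restrict (ball x r), 0 < infDist y Γ :=
    ae_restrict_of_forall_mem measurableSet_ball fun y hy =>
      infDist_pos_of_mem_ball (by linarith) hy
  refine le_of_eq_of_le ?_ (ofReal_rpow_mul_measure_ball_le_infDistWeightedMeasure
    (D := 3 * infDist x Γ) hp hpos (by linarith))
  rw [addHaar_ball_eq_ofReal x hr, ← ENNReal.ofReal_mul' (by positivity),
    Real.mul_rpow (by norm_num) infDist_nonneg]
  ring_nf

lemma infDistWeightedMeasure_ball_le_of_two_mul_le (hp : p ≤ 0) (hr : 0 < r)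
    (hx : 2 * r ≤ infDist x Γ) :
    infDistWeightedMeasure μ p Γ (ball x r) ≤
      ENNReal.ofReal (2⁻¹ ^ p * μ.real (ball (0 : E) 1) * r ^ (dim E : ℝ) * infDist x Γ ^ p) := by
  refine (infDistWeightedMeasure_ball_le_ofReal_rpow_mul
    (D := 2⁻¹ * infDist x Γ) hp (by linarith) (by linarith)).trans_eq ?_
  rw [addHaar_ball_eq_ofReal x hr, ← ENNReal.ofReal_mul' (by positivity),
    Real.mul_rpow (by norm_num) infDist_nonneg]
  ring_nf

end FarFromSet

namespace IsAhlforsRegularOn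

variable {σ : Measure E} {d a C : ℝ} {Γ : Set E} {x : E} {r : ℝ}

lemma addHaar_closure_eq_zero (h : IsAhlforsRegularOn σ d C Γ) (hC : 0 < C) (hd : 0 ≤ d)
    (hdE : d < dim E) : μ (closure Γ) = 0 := by
  have : Nontrivial E :=
    Module.nontrivial_of_finrank_pos (R := ℝ) (by exact_mod_cast hd.trans_lt hdE)
  obtain ⟨a, ha, hda⟩ := exists_between (sub_pos.2 hdE)
  refine measure_null_of_locally_null _ fun y hy =>
    ⟨closure Γ ∩ ball y 1, inter_mem_nhdsWithin _ (ball_mem_nhds y one_pos), ?_⟩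
  have hΓ : Γ.Nonempty := closure_nonempty_iff.1 ⟨y, hy⟩
  have σ_ball : σ (ball y 1) < ⊤ :=
    (h.measure_ball_le_ofReal hΓ one_pos (lt_add_one _)).trans_lt ENNReal.ofReal_lt_top
  have : IsFiniteMeasure (σ.restrict (ball y 1)) := isFiniteMeasure_restrict.2 σ_ball.ne
  have integral_ne_top :
      ∫⁻ z in ball y 1, rieszPotential (σ.restrict (ball y 1)) (a - dim E) z ∂μ ≠ ⊤ :=
    ((setLIntegral_ball_rieszPotential_le ha one_pos one_pos σ_ball.ne).trans_lt
      (ENNReal.mul_lt_top ENNReal.ofReal_lt_top σ_ball)).ne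
  have null := measure_eq_top_of_lintegral_ne_top
    (measurable_rieszPotential _ _).aemeasurable integral_ne_top
  refine measure_mono_null (fun z hz => ?_)
    ((Measure.restrict_apply_eq_zero' measurableSet_ball).1 null)
  exact ⟨h.rieszPotential_eq_top hC (by linarith) (by linarith) hz.1
    (isOpen_ball.mem_nhds hz.2), hz.2⟩

lemma ae_infDist_pos (h : IsAhlforsRegularOn σ d C Γ) (hΓ : Γ.Nonempty) (hC : 0 < C)
    (hd : 0 ≤ d) (hdE : d < dim E) : ∀ᵐ y ∂μ, 0 < infDist y Γ := by
  filter_upwards [measure_eq_zero_iff_ae_notMem.1 (h.addHaar_closure_eq_zero hC hd hdE)]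
    with y hy using (infDist_pos_iff_notMem_closure hΓ).1 hy

lemma ofReal_le_infDistWeightedMeasure_ball (h : IsAhlforsRegularOn σ d C Γ) (hΓ : Γ.Nonempty)
    (hC : 0 < C) (hd : 0 ≤ d) (ha : 0 < a) (hda : d + a ≤ dim E) (hr : 0 < r)
    (hx : infDist x Γ ≤ 2 * r) :
    ENNReal.ofReal (3 ^ (d + a - dim E) * μ.real (ball (0 : E) 1) * r ^ (d + a)) ≤
      infDistWeightedMeasure μ (d + a - dim E) Γ (ball x r) := by
  have hpos : ∀ᵐ y ∂μ, 0 < infDist y Γ := h.ae_infDist_pos hΓ hC hd (by linarith)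
  refine le_of_eq_of_le ?_ (ofReal_rpow_mul_measure_ball_le_infDistWeightedMeasure (D := 3 * r)
    (sub_nonpos.2 hda) (ae_restrict_of_ae hpos) (by linarith))
  rw [addHaar_ball_eq_ofReal x hr, Real.mul_rpow (by norm_num) hr.le,
    ← ENNReal.ofReal_mul (by positivity), Real.rpow_sub hr]
  field_simp

lemma ae_infDist_rpow_le_mul_rieszPotential (h : IsAhlforsRegularOn σ d C Γ) (hΓ : Γ.Nonempty)
    (hC : 0 < C) (hd : 0 ≤ d) (ha : 0 < a) (hda : d + a ≤ dim E) (hx : infDist x Γ ≤ 2 * r) :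
    ∀ᵐ y ∂μ.restrict (ball x r), ENNReal.ofReal (infDist y Γ ^ (d + a - dim E)) ≤
      ENNReal.ofReal (C * 3 ^ (dim E - a)) *
        rieszPotential (σ.restrict (ball x (10 * r))) (a - dim E) y := by
  filter_upwards [ae_restrict_of_ae (h.ae_infDist_pos hΓ hC hd (by linarith)),
    ae_restrict_mem measurableSet_ball] with y hy hyx
  have hyr : infDist y Γ < 3 * r := by
    linarith [infDist_le_infDist_add_dist (s := Γ) (x := y) (y := x), mem_ball.1 hyx]
  rw [add_sub_assoc, ← neg_sub a]
  refine h.ofReal_rpow_le_mul_rieszPotential hΓ hC (by linarith) hy le_rfl (ball_subset_ball' ?_)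
  linarith [mem_ball.1 hyx]

lemma infDistWeightedMeasure_ball_le (h : IsAhlforsRegularOn σ d C Γ) (hΓ : Γ.Nonempty)
    (hC : 0 < C) (hd : 0 ≤ d) (ha : 0 < a) (hda : d + a ≤ dim E) (hr : 0 < r)
    (hx : infDist x Γ ≤ 2 * r) :
    infDistWeightedMeasure μ (d + a - dim E) Γ (ball x r) ≤
      ENNReal.ofReal (C ^ 2 * 3 ^ (dim E - a) * 11 ^ a * 13 ^ d *
        (∫ y in ball (0 : E) 1, ‖y‖ ^ (a - dim E) ∂μ) * r ^ (d + a)) := by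
  have : Nontrivial E :=
    Module.nontrivial_of_finrank_pos (R := ℝ) (by exact_mod_cast (by linarith : (0 : ℝ) < dim E))
  set σ' := σ.restrict (ball x (10 * r))
  set K := ∫ y in ball (0 : E) 1, ‖y‖ ^ (a - dim E) ∂μ
  have σ_ball : σ (ball x (10 * r)) ≤ ENNReal.ofReal (C * (13 * r) ^ d) :=
    h.measure_ball_le_ofReal hΓ (by positivity) (by linarith)
  calc infDistWeightedMeasure μ (d + a - dim E) Γ (ball x r)
      = ∫⁻ y in ball x r, ENNReal.ofReal (infDist y Γ ^ (d + a - dim E)) ∂μ :=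
        infDistWeightedMeasure_ball
    _ ≤ ∫⁻ y in ball x r,
          ENNReal.ofReal (C * 3 ^ (dim E - a)) * rieszPotential σ' (a - dim E) y ∂μ :=
        lintegral_mono_ae (h.ae_infDist_rpow_le_mul_rieszPotential hΓ hC hd ha hda hx)
    _ = ENNReal.ofReal (C * 3 ^ (dim E - a)) *
          ∫⁻ y in ball x r, rieszPotential σ' (a - dim E) y ∂μ :=
        lintegral_const_mul' _ _ ENNReal.ofReal_ne_top
    _ ≤ ENNReal.ofReal (C * 3 ^ (dim E - a)) *
          (ENNReal.ofReal ((r + 10 * r) ^ a * K) * ENNReal.ofReal (C * (13 * r) ^ d)) := by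
        gcongr
        exact (setLIntegral_ball_rieszPotential_le ha hr (by positivity)
          (σ_ball.trans_lt ENNReal.ofReal_lt_top).ne).trans (by gcongr)
    _ = ENNReal.ofReal (C ^ 2 * 3 ^ (dim E - a) * 11 ^ a * 13 ^ d * K * r ^ (d + a)) := by
        rw [← ENNReal.ofReal_mul' (by positivity), ← ENNReal.ofReal_mul (by positivity),
          show r + 10 * r = 11 * r by ring, Real.mul_rpow (by norm_num) hr.le,
          Real.mul_rpow (by norm_num) hr.le, Real.rpow_add hr]
        ring_nf

end IsAhlforsRegularOn

variable (μ) in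
theorem statement1_general {d a C₀ : ℝ} (hd : 0 ≤ d) (ha : 0 < a) (hda : d + a ≤ dim E)
    (hC₀ : 0 < C₀) :
    ∃ C : ℝ, 1 ≤ C ∧
      ∀ (σ : Measure E) (Γ : Set E), Γ.Nonempty → IsAhlforsRegularOn σ d C₀ Γ →
        ∀ x : E, ∀ r : ℝ, 0 < r →
          letI m := infDistWeightedMeasure μ (d + a - dim E) Γ
          letI w := infDist x Γ ^ (d + a - dim E)
          (2 * r ≤ infDist x Γ →
            ENNReal.ofReal (C⁻¹ * r ^ (dim E : ℝ) * w) ≤ m (ball x r) ∧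
              m (ball x r) ≤ ENNReal.ofReal (C * r ^ (dim E : ℝ) * w)) ∧
          (infDist x Γ ≤ 2 * r →
            ENNReal.ofReal (C⁻¹ * r ^ (d + a)) ≤ m (ball x r) ∧
              m (ball x r) ≤ ENNReal.ofReal (C * r ^ (d + a))) := by
  have volume_pos : 0 < μ.real (ball (0 : E) 1) :=
    ENNReal.toReal_pos (measure_ball_pos μ 0 one_pos).ne' measure_ball_lt_top.ne
  have hp : d + a - dim E ≤ 0 := sub_nonpos.2 hda
  obtain ⟨C, hC, le_lower, far_le, near_le⟩ := exists_one_le_inv_le_le_le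
    (show 0 < 3 ^ (d + a - dim E) * μ.real (ball (0 : E) 1) by positivity)
    (2⁻¹ ^ (d + a - dim E) * μ.real (ball (0 : E) 1))
    (C₀ ^ 2 * 3 ^ (dim E - a) * 11 ^ a * 13 ^ d *
      ∫ y in ball (0 : E) 1, ‖y‖ ^ (a - dim E) ∂μ)
  refine ⟨C, hC, fun σ Γ hΓ h x r hr => ?_⟩
  have weight_nonneg : 0 ≤ infDist x Γ ^ (d + a - dim E) :=
    Real.rpow_nonneg infDist_nonneg _
  refine ⟨fun hx => ⟨?_, ?_⟩, fun hx => ⟨?_, ?_⟩⟩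
  · refine le_trans ?_ (ofReal_le_infDistWeightedMeasure_ball_of_two_mul_le hp hr hx)
    gcongr
  · refine (infDistWeightedMeasure_ball_le_of_two_mul_le hp hr hx).trans ?_
    gcongr
  · refine le_trans ?_ (h.ofReal_le_infDistWeightedMeasure_ball hΓ hC₀ hd ha hda hr hx)
    gcongr
  · refine (h.infDistWeightedMeasure_ball_le hΓ hC₀ hd ha hda hr hx).trans ?_
    gcongr

end Haar

lemma AhlforsRegular.isAhlforsRegularOn {n : ℕ} {d C₀ : ℝ} {Γ : Set (Euc n)}
    (h : AhlforsRegular n d C₀ Γ) : IsAhlforsRegularOn (μH[d].restrict Γ) d C₀ Γ := by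
  intro x hx r hr
  rw [Measure.restrict_apply measurableSet_ball, inter_comm]
  exact h x hx r hr

/-- estimates for the measure of balls under the weighted measure `m`. -/
theorem statement1 (n : ℕ) (hn : 2 ≤ n) (d C₀ : ℝ) (hd0 : 0 < d)
    (hdn : d < (n : ℝ) - 1) (hC₀ : 1 ≤ C₀) :
    ∃ C : ℝ, 1 ≤ C ∧
      ∀ Γ : Set (Euc n), Γ.Nonempty → IsClosed Γ → AhlforsRegular n d C₀ Γ →
        ∀ x : Euc n, ∀ r : ℝ, 0 < r →
          (2 * r ≤ infDist x Γ →
            ENNReal.ofReal (C⁻¹ * r ^ (n : ℝ) * weightW n d Γ x) ≤ measW n d Γ (ball x r) ∧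
              measW n d Γ (ball x r) ≤ ENNReal.ofReal (C * r ^ (n : ℝ) * weightW n d Γ x)) ∧
          (infDist x Γ ≤ 2 * r →
            ENNReal.ofReal (C⁻¹ * r ^ (d + 1)) ≤ measW n d Γ (ball x r) ∧
              measW n d Γ (ball x r) ≤ ENNReal.ofReal (C * r ^ (d + 1))) := by
  obtain ⟨C, hC, bounds⟩ := statement1_general (volume : Measure (Euc n)) (a := 1) hd0.le one_pos
    (by rw [finrank_euclideanSpace_fin]; linarith) (zero_lt_one.trans_le hC₀)
  rw [finrank_euclideanSpace_fin] at bounds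
  exact ⟨C, hC, fun Γ hΓ _ h => bounds _ Γ hΓ h.isAhlforsRegularOn⟩
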